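/- (Flat pairing) There exists a pairing operation P on sets of set theory (ZF sets) such that: (1) P is injective as a pairing, i.e., if P(x, y) = P(x', y') then x = x' and y = y'; and (2) P does not raise rank past infinite levels: for every infinite ordinal α, if the (von Neumann) rank of x is less than α and the rank of y is less than α, then the rank of P(x, y) is less than α. -/

import Mathlib

/-!
The pairing is the Quine–Rosser one. Let `σ a = {a}` for `a` of finite rank and `σ a = a` otherwise;
`σ` is injective and never empty. Hence `φ x = {σ a | a ∈ x}` is injective and never contains `∅`,
so the sets `φ x` are disjoint from the sets `φ y ∪ {∅}` and
`P x y = {φ a | a ∈ x} ∪ {φ b ∪ {∅} | b ∈ y}` determines `x` and `y`.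

For the ranks, each operation used satisfies `rank (f a) ≤ 1 + rank a`, with the `1` added on the
*left*. This bound passes from `f` to the operation `x ↦ {f a | a ∈ x}` without changing the
constant, and left addition of `1` fixes every infinite ordinal, so it maps ordinals below an
infinite `α` to ordinals below `α`.
-/

namespace FlatPairing

universe u

open Order

/-- The set `{f a | a ∈ x}`; replacement for a function that need not come with a
`ZFSet.Definable₁` instance. -/
noncomputable def img (f : ZFSet.{u} → ZFSet.{u}) (x : ZFSet.{u}) : ZFSet.{u} :=
  ZFSet.range fun a : x => f a

theorem mem_img {f : ZFSet.{u} → ZFSet.{u}} {x z : ZFSet.{u}} :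
    z ∈ img f x ↔ ∃ a ∈ x, f a = z := by
  simp [img]

theorem apply_mem_img {f : ZFSet.{u} → ZFSet.{u}} (hf : f.Injective) {x a : ZFSet.{u}} :
    f a ∈ img f x ↔ a ∈ x := by
  simp [mem_img, hf.eq_iff]

theorem img_injective {f : ZFSet.{u} → ZFSet.{u}} (hf : f.Injective) : (img f).Injective := by
  intro x y h
  ext a
  rw [← apply_mem_img hf, h, apply_mem_img hf]

theorem rank_img_le {f : ZFSet.{u} → ZFSet.{u}} (hf : ∀ a, (f a).rank ≤ 1 + a.rank)
    (x : ZFSet.{u}) : (img f x).rank ≤ 1 + x.rank := by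
  rw [ZFSet.rank_le_iff]
  intro z hz
  obtain ⟨a, ha, rfl⟩ := mem_img.1 hz
  exact (hf a).trans_lt (by gcongr; exact ZFSet.rank_lt_of_mem ha)

open Classical in
/-- The injection of the universe into the nonempty sets that sends `a` to `{a}` if `a` has finite
rank and fixes `a` otherwise. -/
noncomputable def shift (a : ZFSet.{u}) : ZFSet.{u} :=
  if a.rank < Ordinal.omega0 then {a} else a

theorem shift_injective : shift.{u}.Injective := by
  -- A set of infinite rank is not the singleton of a set of finite rank.
  have key : ∀ a b : ZFSet.{u}, a.rank < Ordinal.omega0 → ¬ b.rank < Ordinal.omega0 →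
      {a} ≠ b := by
    rintro a _ ha hb rfl
    exact hb (by simpa using Ordinal.isSuccLimit_omega0.succ_lt ha)
  intro a b h
  unfold shift at h
  split_ifs at h with ha hb hb
  · exact ZFSet.singleton_injective h
  · exact (key a b ha hb h).elim
  · exact (key b a hb ha h.symm).elim
  · exact h

theorem shift_ne_empty (a : ZFSet.{u}) : shift a ≠ ∅ := by
  unfold shift
  split_ifs with ha
  · intro h
    exact ZFSet.notMem_empty a (h ▸ ZFSet.mem_singleton.2 rfl)
  · rintro rfl
    exact ha (by simp [Ordinal.omega0_pos])

theorem rank_shift_le (a : ZFSet.{u}) : (shift a).rank ≤ 1 + a.rank := by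
  unfold shift
  split_ifs with ha
  · obtain ⟨n, hn⟩ := Ordinal.lt_omega0.1 ha
    rw [ZFSet.rank_singleton, hn, succ_eq_add_one]
    -- Left and right addition of `1` agree on finite ordinals.
    exact_mod_cast (Nat.add_comm n 1).le
  · exact le_add_self

/-- The tag of a first coordinate's element: an injection whose values omit `∅` as a member. -/
noncomputable def tagL (x : ZFSet.{u}) : ZFSet.{u} := img shift x

/-- The tag of a second coordinate's element: an injection whose values have `∅` as a member. -/
noncomputable def tagR (x : ZFSet.{u}) : ZFSet.{u} := insert ∅ (tagL x)

theorem empty_notMem_tagL (x : ZFSet.{u}) : ∅ ∉ tagL x := by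
  intro h
  obtain ⟨a, -, ha⟩ := mem_img.1 h
  exact shift_ne_empty a ha

theorem tagL_injective : tagL.{u}.Injective := img_injective shift_injective

theorem tagL_ne_tagR (x y : ZFSet.{u}) : tagL x ≠ tagR y := fun h =>
  empty_notMem_tagL x (h ▸ ZFSet.mem_insert _ _)

theorem tagR_injective : tagR.{u}.Injective := by
  intro x y h
  apply tagL_injective
  ext z
  have hz : z ∈ tagR x ↔ z ∈ tagR y := by rw [h]
  simp only [tagR, ZFSet.mem_insert_iff] at hz
  by_cases h0 : z = ∅
  · subst h0
    simp [empty_notMem_tagL]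
  · simpa [h0] using hz

theorem rank_tagL_le (x : ZFSet.{u}) : (tagL x).rank ≤ 1 + x.rank :=
  rank_img_le rank_shift_le x

theorem rank_tagR_le (x : ZFSet.{u}) : (tagR x).rank ≤ 1 + x.rank := by
  rw [tagR, ZFSet.rank_insert]
  exact max_le (by simp) (rank_tagL_le x)

/-- The Quine–Rosser pair of `x` and `y`. -/
noncomputable def flatPair (x y : ZFSet.{u}) : ZFSet.{u} := img tagL x ∪ img tagR y

theorem tagL_mem_flatPair {x y a : ZFSet.{u}} : tagL a ∈ flatPair x y ↔ a ∈ x := by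
  have h : tagL a ∉ img tagR y := fun h => by
    obtain ⟨b, -, hb⟩ := mem_img.1 h
    exact tagL_ne_tagR a b hb.symm
  simp [flatPair, apply_mem_img tagL_injective, h]

theorem tagR_mem_flatPair {x y b : ZFSet.{u}} : tagR b ∈ flatPair x y ↔ b ∈ y := by
  have h : tagR b ∉ img tagL x := fun h => by
    obtain ⟨a, -, ha⟩ := mem_img.1 h
    exact tagL_ne_tagR a b ha
  simp [flatPair, apply_mem_img tagR_injective, h]

end FlatPairing

/-- (Flat pairing) There is a pairing operation on ZF sets that is injective as a
pairing and does not raise rank past infinite levels: for every infinite ordinal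
`α`, sets of rank `< α` are paired to a set of rank `< α`. -/
theorem exists_flat_pairing :
    ∃ P : ZFSet → ZFSet → ZFSet,
      (∀ x y x' y', P x y = P x' y' → x = x' ∧ y = y') ∧
      ∀ α : Ordinal, Ordinal.omega0 ≤ α →
        ∀ x y : ZFSet, x.rank < α → y.rank < α → (P x y).rank < α := by
  refine ⟨FlatPairing.flatPair, fun x y x' y' h => ⟨?_, ?_⟩, fun α hα x y hx hy => ?_⟩
  · ext a
    rw [← FlatPairing.tagL_mem_flatPair (y := y), h, FlatPairing.tagL_mem_flatPair]
  · ext b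
    rw [← FlatPairing.tagR_mem_flatPair (x := x), h, FlatPairing.tagR_mem_flatPair]
  · have key : ∀ β < α, 1 + β < α := fun β hβ => by
      rw [← Ordinal.one_add_of_omega0_le hα]
      gcongr
    rw [FlatPairing.flatPair, ZFSet.rank_union]
    exact max_lt ((FlatPairing.rank_img_le FlatPairing.rank_tagL_le x).trans_lt (key _ hx))
      ((FlatPairing.rank_img_le FlatPairing.rank_tagR_le y).trans_lt (key _ hy))
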